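/- Let Σ_A(ℕ) be a topologically mixing, finitely primitive (BIP) countable Markov shift, f : Σ_A(ℕ) → ℝ satisfying the Walters condition with Var_1 f < ∞ and P(f) < ∞, and for β ≥ 1 let h_β be the Ruelle eigenfunction of L_{βf}. Then the family of functions V_β := (1/β) log h_β, β ≥ 1, is uniformly bounded and equicontinuous; in particular there is a sequence β_i → ∞ such that V_{β_i} converges uniformly on every compact subset of Σ_A(ℕ). -/

import Mathlib

open Filter Topology MeasureTheory
open scoped ENNReal

/-- The countable Markov shift over alphabet ℕ determined by the 0-1 matrix `A`. -/
def MarkovShift (A : ℕ → ℕ → Bool) : Type :=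
  {x : ℕ → ℕ // ∀ i, A (x i) (x (i + 1)) = true}

namespace MarkovShift

variable {A : ℕ → ℕ → Bool}

instance : TopologicalSpace (MarkovShift A) :=
  instTopologicalSpaceSubtype

instance : MeasurableSpace (MarkovShift A) := borel _

instance : BorelSpace (MarkovShift A) := ⟨rfl⟩

/-- The shift map. -/
def shift (x : MarkovShift A) : MarkovShift A :=
  ⟨fun n => x.1 (n + 1), fun i => x.2 (i + 1)⟩

/-- The cylinder set determined by a finite word. -/
def cylinder (w : List ℕ) : Set (MarkovShift A) :=
  {x | ∀ i : Fin w.length, x.1 i = w.get i}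

/-- The cylinder set determined by the first `m` coordinates of `x`. -/
def cylOf (x : MarkovShift A) (m : ℕ) : Set (MarkovShift A) :=
  {y | ∀ i < m, y.1 i = x.1 i}

/-- A symbol is admissible when its cylinder is nonempty. -/
def Admissible (A : ℕ → ℕ → Bool) (a : ℕ) : Prop :=
  ∃ x : MarkovShift A, x.1 0 = a

/-- Topologically mixing. -/
def TopologicallyMixing (A : ℕ → ℕ → Bool) : Prop :=
  ∀ a b : ℕ, Admissible A a → Admissible A b →
    ∃ N : ℕ, ∀ n ≥ N, ∃ x : MarkovShift A, x.1 0 = a ∧ (shift^[n] x).1 0 = b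

/-- Finitely primitive (BIP). -/
def FinitelyPrimitive (A : ℕ → ℕ → Bool) : Prop :=
  ∃ (K₀ : ℕ) (F : Finset ℕ), ∀ a b : ℕ, Admissible A a → Admissible A b →
    ∃ w : List ℕ, w.length = K₀ ∧ (∀ c ∈ w, c ∈ F) ∧
      List.Chain' (fun u v => A u v = true) (a :: (w ++ [b]))

/-- First coordinate where two distinct points disagree. -/
noncomputable def firstDiff (x y : MarkovShift A) (h : x ≠ y) : ℕ :=
  Nat.find (Function.ne_iff.mp (fun hxy : x.1 = y.1 => h (Subtype.ext hxy)))

open Classical in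
/-- The metric `d(x,y) = r^{t(x,y)}`. -/
noncomputable def dist' (r : ℝ) (x y : MarkovShift A) : ℝ :=
  if h : x = y then 0 else r ^ firstDiff x y h

/-- Birkhoff sum `S_n f`. -/
def birkhoff (f : MarkovShift A → ℝ) (n : ℕ) (x : MarkovShift A) : ℝ :=
  ∑ j ∈ Finset.range n, f (shift^[j] x)

/-- The set of values `|S_n f x - S_n f y|` over pairs agreeing on the first `m` coordinates. -/
def varSet (f : MarkovShift A → ℝ) (n m : ℕ) : Set ℝ :=
  {c | ∃ x y : MarkovShift A, (∀ i < m, x.1 i = y.1 i) ∧ c = |birkhoff f n x - birkhoff f n y|}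

/-- `Var_m (S_n f)`. -/
noncomputable def varBirk (f : MarkovShift A → ℝ) (n m : ℕ) : ℝ := sSup (varSet f n m)

/-- `Var_1 f < ∞`. -/
def Var1Finite (f : MarkovShift A → ℝ) : Prop := BddAbove (varSet f 1 1)

/-- The set whose supremum is `sup_{n ≥ 1} Var_{n+k}(S_n f)`. -/
def waltersSet (f : MarkovShift A → ℝ) (k : ℕ) : Set ℝ :=
  {c | ∃ n, 1 ≤ n ∧ c ∈ varSet f n (n + k)}

/-- `M_k = sup_{n ≥ 1} Var_{n+k}(S_n f)`. -/
noncomputable def waltersSup (f : MarkovShift A → ℝ) (k : ℕ) : ℝ := sSup (waltersSet f k)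

/-- The Walters condition. -/
def SatisfiesWalters (f : MarkovShift A → ℝ) : Prop :=
  (∀ k, 1 ≤ k → BddAbove (waltersSet f k)) ∧
    Tendsto (fun k => waltersSup f k) atTop (𝓝 0)

/-- The partition function `Z_n(f,a) = Σ_{σ^n x = x, x₀ = a} e^{S_n f (x)}`. -/
noncomputable def partitionSum (f : MarkovShift A → ℝ) (n : ℕ) (a : ℕ) : ℝ :=
  ∑' x : {x : MarkovShift A // shift^[n] x = x ∧ x.1 0 = a}, Real.exp (birkhoff f n x.1)

/-- `f` has (finite) Gurevich pressure `p`. -/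
def HasGurevichPressure (f : MarkovShift A → ℝ) (p : ℝ) : Prop :=
  ∀ a : ℕ, Admissible A a →
    (∀ n, 1 ≤ n → Summable fun x : {x : MarkovShift A // shift^[n] x = x ∧ x.1 0 = a} =>
        Real.exp (birkhoff f n x.1)) ∧
    Tendsto (fun n : ℕ => (1 / (n : ℝ)) * Real.log (partitionSum f n a)) atTop (𝓝 p)

/-- σ-invariant Borel probability measure. -/
def IsInvariantProb (μ : Measure (MarkovShift A)) : Prop :=
  IsProbabilityMeasure μ ∧ μ.map shift = μ

/-- `m(f)`, the maximal ergodic average. -/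
noncomputable def mf (f : MarkovShift A → ℝ) : ℝ :=
  sSup {c | ∃ μ : Measure (MarkovShift A),
    IsInvariantProb μ ∧ Integrable f μ ∧ ∫ x, f x ∂μ = c}

/-- A maximizing measure for `f`. -/
def IsMaximizing (f : MarkovShift A → ℝ) (μ : Measure (MarkovShift A)) : Prop :=
  IsInvariantProb μ ∧ Integrable f μ ∧ ∫ x, f x ∂μ = mf f

/-- Bounded real valued function. -/
def BoundedFun (g : MarkovShift A → ℝ) : Prop := ∃ C, ∀ x, |g x| ≤ C

/-- A bounded calibrated sub-action for `f`. -/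
def IsCalibratedSubaction (f V : MarkovShift A → ℝ) : Prop :=
  Continuous V ∧ BoundedFun V ∧
    (∀ x, f x + V x - V (shift x) - mf f ≤ 0) ∧
    (∀ y, ∃ x, shift x = y ∧ f x + V x - V (shift x) - mf f = 0)

/-- The Ruelle transfer operator `(L_g u)(x) = Σ_{σ y = x} e^{g(y)} u(y)`. -/
noncomputable def ruelle (g u : MarkovShift A → ℝ) (x : MarkovShift A) : ℝ :=
  ∑' y : {y : MarkovShift A // shift y = x}, Real.exp (g y.1) * u y.1

/-- Ruelle-Perron-Frobenius data for the potential `f` with pressure `p`: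
eigenfunction `h`, eigenmeasure `ν`. -/
def IsRPF (f : MarkovShift A → ℝ) (p : ℝ) (h : MarkovShift A → ℝ)
    (ν : Measure (MarkovShift A)) : Prop :=
  Continuous h ∧ (∀ x, 0 < h x) ∧
    (∀ x, ruelle f h x = Real.exp p * h x) ∧
    IsProbabilityMeasure ν ∧
    (∀ g : MarkovShift A → ℝ, Continuous g → BoundedFun g →
      ∫ x, ruelle f g x ∂ν = Real.exp p * ∫ x, g x ∂ν) ∧
    ∫ x, h x ∂ν = 1

/-- The Gibbs measure `dμ = h dν`. -/
noncomputable def gibbs (h : MarkovShift A → ℝ) (ν : Measure (MarkovShift A)) :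
    Measure (MarkovShift A) :=
  ν.withDensity fun x => ENNReal.ofReal (h x)

/-- The Mañé potential `S_f(x,y)` (with respect to the metric of parameter `r`). -/
noncomputable def manePot (r : ℝ) (f : MarkovShift A → ℝ) (x y : MarkovShift A) : EReal :=
  ⨅ ε : {ε : ℝ // 0 < ε}, ⨆ n : {n : ℕ // 1 ≤ n},
    ⨆ _z : {z : MarkovShift A // dist' r x z < ε.1 ∧ shift^[n.1] z = y},
      ((birkhoff (fun w => f w - mf f) n.1 _z.1 : ℝ) : EReal)

/-- The (topological) support of a measure. -/
def msupport (μ : Measure (MarkovShift A)) : Set (MarkovShift A) :=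
  {x | ∀ U : Set (MarkovShift A), IsOpen U → x ∈ U → 0 < μ U}

end MarkovShift

namespace MarkovShift


theorem shift_iter_apply {A : ℕ → ℕ → Bool} (n : ℕ) (z : MarkovShift A) (i : ℕ) :
    (shift^[n] z).1 i = z.1 (i + n) := by
  induction n generalizing z i with
  | zero => rfl
  | succ n ih =>
    rw [Function.iterate_succ_apply, ih]
    change z.1 (i + n + 1) = _
    rfl

theorem bip_fun {A : ℕ → ℕ → Bool} (hbip : FinitelyPrimitive A) :
    ∃ (K : ℕ) (F : Finset ℕ), ∀ a b : ℕ, Admissible A a → Admissible A b →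
      ∃ w : ℕ → ℕ, w 0 = a ∧ w (K + 1) = b ∧ (∀ i < K + 1, A (w i) (w (i + 1)) = true) ∧
        ∀ i, 1 ≤ i → i < K + 1 → w i ∈ F := by
  obtain ⟨K, F, hF⟩ := hbip
  refine ⟨K, F, fun a b ha hb => ?_⟩
  obtain ⟨w, hwl, hwF, hc⟩ := hF a b ha hb
  have hc' : List.IsChain (fun u v => A u v = true) (a :: (w ++ [b])) := hc
  rw [List.isChain_iff_getElem] at hc'
  have hlen : (a :: (w ++ [b])).length = K + 2 := by simp [hwl]
  have key : ∀ i, ∀ hi : i < (a :: (w ++ [b])).length,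
      (a :: (w ++ [b])).getD i 0 = (a :: (w ++ [b]))[i] := by
    intro i hi
    exact List.getD_eq_getElem _ _ hi
  refine ⟨fun i => (a :: (w ++ [b])).getD i 0, ?_, ?_, ?_, ?_⟩
  · simp
  · change (a :: (w ++ [b])).getD (K + 1) 0 = b
    rw [key (K + 1) (by omega)]
    simp [← hwl]
  · intro i hi
    change A ((a :: (w ++ [b])).getD i 0) ((a :: (w ++ [b])).getD (i + 1) 0) = true
    rw [key i (by omega), key (i + 1) (by omega)]
    exact hc' i (by omega)
  · intro i h1 h2
    change (a :: (w ++ [b])).getD i 0 ∈ F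
    rw [key i (by omega)]
    obtain ⟨j, rfl⟩ : ∃ j, i = j + 1 := ⟨i - 1, by omega⟩
    rw [List.getElem_cons_succ, List.getElem_append_left (by omega)]
    exact hwF _ (List.getElem_mem _)

/-- Put the first `n` letters of `w` in front of `y`. -/
theorem exists_glue {A : ℕ → ℕ → Bool} (w : ℕ → ℕ) (n : ℕ) (y : MarkovShift A)
    (hw : ∀ i < n, A (w i) (w (i + 1)) = true) (hy : w n = y.1 0) :
    ∃ z : MarkovShift A, shift^[n] z = y ∧ ∀ i < n, z.1 i = w i := by
  refine ⟨⟨fun i => if i < n then w i else y.1 (i - n), fun i => ?_⟩, ?_, ?_⟩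
  · by_cases h1 : i + 1 < n
    · have h2 : i < n := by omega
      simp only [h1, h2, if_true]
      exact hw i h2
    · by_cases h2 : i < n
      · have h3 : i + 1 = n := by omega
        simp only [h1, h2, if_true, if_false]
        rw [h3, Nat.sub_self, ← hy, ← h3]
        exact hw i h2
      · simp only [h1, h2, if_false]
        have : i + 1 - n = (i - n) + 1 := by omega
        rw [this]
        exact y.2 _
  · refine Subtype.ext (funext fun i => (shift_iter_apply _ _ _).trans ?_)
    change (if i + n < n then w (i + n) else y.1 (i + n - n)) = y.1 i
    rw [if_neg (by omega), Nat.add_sub_cancel]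
  · intro i hi
    exact if_pos hi

theorem exists_periodic {A : ℕ → ℕ → Bool} (w : ℕ → ℕ) (n : ℕ) (hn : 1 ≤ n)
    (hw : ∀ i < n, A (w i) (w (i + 1)) = true) (h0 : w n = w 0) :
    ∃ z : MarkovShift A, shift^[n] z = z ∧ ∀ i < n, z.1 i = w i := by
  refine ⟨⟨fun i => w (i % n), fun i => ?_⟩, ?_, ?_⟩
  · have hlt : i % n < n := Nat.mod_lt _ hn
    have := hw (i % n) hlt
    by_cases h1 : i % n + 1 = n
    · have h2 : (i + 1) % n = 0 := by
        rcases Nat.lt_or_ge 1 n with h | h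
        · rw [Nat.add_mod_eq_ite, Nat.mod_eq_of_lt h, if_pos (by omega)]; omega
        · have : n = 1 := by omega
          subst this; exact Nat.mod_one _
      change A (w (i % n)) (w ((i + 1) % n)) = true
      rw [h2, ← h0, ← h1]
      rw [h1]
      rw [h1] at this
      exact this
    · have h2 : (i + 1) % n = i % n + 1 := by
        rw [Nat.add_mod_eq_ite]
        have h : 1 < n := by omega
        rw [Nat.mod_eq_of_lt h, if_neg (by omega)]
      change A (w (i % n)) (w ((i + 1) % n)) = true
      rw [h2]
      exact this
  · refine Subtype.ext (funext fun i => (shift_iter_apply _ _ _).trans ?_)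
    change w ((i + n) % n) = w (i % n)
    rw [Nat.add_mod_right]
  · intro i hi
    change w (i % n) = w i
    rw [Nat.mod_eq_of_lt hi]

theorem admissible_coord {A : ℕ → ℕ → Bool} (x : MarkovShift A) (i : ℕ) :
    Admissible A (x.1 i) :=
  ⟨shift^[i] x, by rw [shift_iter_apply]; simp⟩

theorem birkhoff_one {A : ℕ → ℕ → Bool} (f : MarkovShift A → ℝ) (x : MarkovShift A) :
    birkhoff f 1 x = f x := by
  simp [birkhoff]

/-- Walters constants. -/
theorem walters_bound {A : ℕ → ℕ → Bool} {f : MarkovShift A → ℝ} (hW : SatisfiesWalters f)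
    {n m : ℕ} (hn : 1 ≤ n) (hm : 1 ≤ m) {x y : MarkovShift A}
    (hxy : ∀ i < n + m, x.1 i = y.1 i) :
    birkhoff f n x ≤ waltersSup f m + birkhoff f n y := by
  have := le_csSup (hW.1 m hm) (⟨n, hn, x, y, hxy, rfl⟩ :
    |birkhoff f n x - birkhoff f n y| ∈ waltersSet f m)
  have h2 := le_abs_self (birkhoff f n x - birkhoff f n y)
  unfold waltersSup
  linarith

theorem var1_bound {A : ℕ → ℕ → Bool} {f : MarkovShift A → ℝ} (hV : Var1Finite f) :
    ∃ V : ℝ, 0 ≤ V ∧ ∀ x y : MarkovShift A, x.1 0 = y.1 0 → f x ≤ V + f y := by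
  obtain ⟨V, hV⟩ := hV
  refine ⟨max V 0, le_max_right _ _, fun x y hxy => ?_⟩
  have h1 : |birkhoff f 1 x - birkhoff f 1 y| ≤ V := by
    apply hV
    refine ⟨x, y, fun i hi => ?_, rfl⟩
    obtain rfl : i = 0 := by omega
    exact hxy
  rw [birkhoff_one, birkhoff_one] at h1
  have := le_abs_self (f x - f y)
  have := le_max_left V 0
  linarith

theorem finite_lower {A : ℕ → ℕ → Bool} {f : MarkovShift A → ℝ} (hV : Var1Finite f)
    (F : Finset ℕ) : ∃ c : ℝ, 0 ≤ c ∧ ∀ x : MarkovShift A, x.1 0 ∈ F → -c ≤ f x := by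
  obtain ⟨V, hV0, hV⟩ := var1_bound hV
  induction F using Finset.induction_on with
  | empty => exact ⟨0, le_rfl, by simp⟩
  | insert a F _ ih =>
    obtain ⟨c, hc0, hc⟩ := ih
    by_cases ha : ∃ x : MarkovShift A, x.1 0 = a
    · obtain ⟨p, hp⟩ := ha
      refine ⟨max c (V - f p), le_trans hc0 (le_max_left _ _), fun x hx => ?_⟩
      rcases Finset.mem_insert.1 hx with h | h
      · have := hV p x (by rw [hp, h])
        have := le_max_right c (V - f p)
        linarith
      · have := hc x h
        have := le_max_left c (V - f p)
        linarith
    · refine ⟨c, hc0, fun x hx => ?_⟩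
      rcases Finset.mem_insert.1 hx with h | h
      · exact absurd ⟨x, h⟩ ha
      · exact hc x h

/-- Uniform summability of `exp f` over symbols, in the form of an injection to periodic points. -/
theorem exists_periodic_family {A : ℕ → ℕ → Bool} (hbip : FinitelyPrimitive A)
    {f : MarkovShift A → ℝ} (hV : Var1Finite f) (x0 : MarkovShift A) :
    ∃ (n k : ℕ) (D : ℝ), 1 ≤ n ∧ ∀ y : MarkovShift A, ∃ z : MarkovShift A,
      shift^[n] z = z ∧ z.1 0 = x0.1 0 ∧ z.1 k = y.1 0 ∧ f y ≤ D + birkhoff f n z := by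
  obtain ⟨K, F, hF⟩ := bip_fun hbip
  obtain ⟨V, hV0, hVb⟩ := var1_bound hV
  obtain ⟨c, hc0, hc⟩ := finite_lower hV (insert (x0.1 0) F)
  refine ⟨K + 1 + (K + 1), K + 1, V + (K + 1 + (K + 1) : ℕ) * c, by omega, fun y => ?_⟩
  obtain ⟨w1, h10, h1b, h1A, h1F⟩ := hF _ _ (admissible_coord x0 0) (admissible_coord y 0)
  obtain ⟨w2, h20, h2b, h2A, h2F⟩ := hF _ _ (admissible_coord y 0) (admissible_coord x0 0)
  obtain ⟨z, hz1, hz2⟩ := exists_periodic (A := A)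
    (fun i => if i < K + 1 then w1 i else w2 (i - (K + 1))) (K + 1 + (K + 1)) (by omega)
    (by
      intro i hi
      by_cases h1 : i + 1 < K + 1
      · have h2 : i < K + 1 := by omega
        simp only [h1, h2, if_true]
        exact h1A i h2
      · by_cases h2 : i < K + 1
        · have h3 : i = K := by omega
          subst h3
          simp only [h2, if_true, lt_irrefl, if_false, Nat.sub_self]
          rw [h20, ← h1b]
          exact h1A i h2
        · simp only [h1, h2, if_false]
          have : i + 1 - (K + 1) = (i - (K + 1)) + 1 := by omega
          rw [this]
          exact h2A _ (by omega))
    (by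
      rw [if_neg (by omega), if_pos (by omega), Nat.add_sub_cancel, h10, h2b])
  have hz0 : z.1 0 = x0.1 0 := by rw [hz2 0 (by omega)]; simp [h10]
  have hzk : z.1 (K + 1) = y.1 0 := by rw [hz2 (K + 1) (by omega)]; simp [h20]
  refine ⟨z, hz1, hz0, hzk, ?_⟩
  have hterm : ∀ j ∈ Finset.range (K + 1 + (K + 1)),
      (if j = K + 1 then f (shift^[K + 1] z) else 0) - c ≤ f (shift^[j] z) := by
    intro j hj
    have hj' : j < K + 1 + (K + 1) := Finset.mem_range.1 hj
    by_cases hjk : j = K + 1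
    · subst hjk; simp [hc0]
    · rw [if_neg hjk, zero_sub]
      apply hc
      rw [shift_iter_apply, zero_add]
      rcases Nat.eq_zero_or_pos j with h0 | h0
      · subst h0; rw [hz0]; exact Finset.mem_insert_self _ _
      · apply Finset.mem_insert_of_mem
        rw [hz2 j hj']
        by_cases h1 : j < K + 1
        · simp only [h1, if_true]; exact h1F j h0 h1
        · simp only [h1, if_false]; exact h2F _ (by omega) (by omega)
  have hsum := Finset.sum_le_sum hterm
  rw [Finset.sum_sub_distrib, Finset.sum_ite_eq', if_pos (Finset.mem_range.2 (by omega)),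
    Finset.sum_const, Finset.card_range, nsmul_eq_mul] at hsum
  have h3 := hVb y (shift^[K + 1] z) (by rw [shift_iter_apply, zero_add, hzk])
  unfold birkhoff
  linarith

/-- `n`-fold transfer operator of `β f`, with values in `[0,∞]`. -/
noncomputable def nOp {A : ℕ → ℕ → Bool} (f : MarkovShift A → ℝ) (β : ℝ) (n : ℕ)
    (u : MarkovShift A → ℝ≥0∞) (x : MarkovShift A) : ℝ≥0∞ :=
  ∑' z : {z : MarkovShift A // shift^[n] z = x},
    ENNReal.ofReal (Real.exp (β * birkhoff f n z.1)) * u z.1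

/-- Preimages of order `n + 1` as preimages of preimages. -/
def fiberEquiv {A : ℕ → ℕ → Bool} (n : ℕ) (x : MarkovShift A) :
    (Σ y : {y : MarkovShift A // shift^[1] y = x}, {z : MarkovShift A // shift^[n] z = y.1}) ≃
      {z : MarkovShift A // shift^[n + 1] z = x} where
  toFun p := ⟨p.2.1, by
    rw [Function.iterate_succ_apply', p.2.2]; exact p.1.2⟩
  invFun z := ⟨⟨shift^[n] z.1,
    (Function.iterate_succ_apply' shift n z.1).symm.trans z.2⟩, ⟨z.1, rfl⟩⟩
  left_inv := by
    rintro ⟨⟨y, hy⟩, ⟨z, hz⟩⟩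
    change shift^[n] z = y at hz
    subst y
    rfl
  right_inv := by
    rintro ⟨z, hz⟩
    rfl

theorem nOp_succ {A : ℕ → ℕ → Bool} (f : MarkovShift A → ℝ) (β : ℝ) (n : ℕ)
    (u : MarkovShift A → ℝ≥0∞) (x : MarkovShift A) :
    nOp f β (n + 1) u x = nOp f β 1 (nOp f β n u) x := by
  unfold nOp
  rw [← (fiberEquiv n x).tsum_eq, ENNReal.tsum_sigma']
  refine tsum_congr fun y => ?_
  rw [← ENNReal.tsum_mul_left]
  refine tsum_congr fun z => ?_
  change ENNReal.ofReal (Real.exp (β * birkhoff f (n + 1) z.1)) * u z.1 = _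
  rw [← mul_assoc, ← ENNReal.ofReal_mul (Real.exp_pos _).le, ← Real.exp_add]
  congr 3
  rw [birkhoff_one]
  unfold birkhoff
  rw [Finset.sum_range_succ, z.2]
  ring

theorem nOp_mono {A : ℕ → ℕ → Bool} (f : MarkovShift A → ℝ) (β : ℝ) (n : ℕ)
    {u v : MarkovShift A → ℝ≥0∞} (huv : ∀ x, u x ≤ v x) (x : MarkovShift A) :
    nOp f β n u x ≤ nOp f β n v x :=
  ENNReal.tsum_le_tsum fun z => by gcongr; exact huv _

theorem nOp_const_mul {A : ℕ → ℕ → Bool} (f : MarkovShift A → ℝ) (β : ℝ) (n : ℕ)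
    (c : ℝ≥0∞) (u : MarkovShift A → ℝ≥0∞) (x : MarkovShift A) :
    nOp f β n (fun y => c * u y) x = c * nOp f β n u x := by
  unfold nOp
  rw [← ENNReal.tsum_mul_left]
  refine tsum_congr fun z => ?_
  ring

theorem nOp_zero {A : ℕ → ℕ → Bool} (f : MarkovShift A → ℝ) (β : ℝ)
    (u : MarkovShift A → ℝ≥0∞) (x : MarkovShift A) :
    nOp f β 0 u x = u x := by
  unfold nOp
  rw [tsum_eq_single (⟨x, rfl⟩ : {z : MarkovShift A // shift^[0] z = x})]
  · simp [birkhoff]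
  · rintro ⟨z, hz⟩ hne
    exact absurd (Subtype.ext hz) hne

/-- Bounded distortion of the iterates. -/
theorem nOp_distortion {A : ℕ → ℕ → Bool} {f : MarkovShift A → ℝ} (hW : SatisfiesWalters f)
    {β : ℝ} (hβ : 0 ≤ β) {n m k : ℕ} (hn : 1 ≤ n) (hm : 1 ≤ m) (hk : k ≤ n + m)
    {u : MarkovShift A → ℝ≥0∞}
    (hu : ∀ z z' : MarkovShift A, (∀ i < k, z.1 i = z'.1 i) → u z ≤ u z')
    {x y : MarkovShift A} (hxy : ∀ i < m, x.1 i = y.1 i) :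
    nOp f β n u x ≤ ENNReal.ofReal (Real.exp (β * waltersSup f m)) * nOp f β n u y := by
  have hex : ∀ z : {z : MarkovShift A // shift^[n] z = x}, ∃ z' : MarkovShift A,
      shift^[n] z' = y ∧ ∀ i < n, z'.1 i = z.1.1 i := by
    intro z
    refine exists_glue z.1.1 n y (fun i _ => z.1.2 i) ?_
    have h0 := shift_iter_apply n z.1 0
    rw [z.2, zero_add] at h0
    rw [← hxy 0 (by omega), h0]
  choose φ hφ1 hφ2 using hex
  have hagree : ∀ z : {z : MarkovShift A // shift^[n] z = x}, ∀ i < n + m,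
      z.1.1 i = (φ z).1 i := by
    intro z i hi
    by_cases h : i < n
    · exact (hφ2 z i h).symm
    · obtain ⟨j, rfl⟩ : ∃ j, i = j + n := ⟨i - n, by omega⟩
      rw [← shift_iter_apply, ← shift_iter_apply, z.2, hφ1]
      exact hxy j (by omega)
  have hinj : Function.Injective
      (fun z : {z : MarkovShift A // shift^[n] z = x} =>
        (⟨φ z, hφ1 z⟩ : {z : MarkovShift A // shift^[n] z = y})) := by
    intro z1 z2 h12
    have h12' : φ z1 = φ z2 := congrArg Subtype.val h12
    refine Subtype.ext (Subtype.ext (funext fun i => ?_))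
    by_cases h : i < n
    · rw [← hφ2 z1 i h, ← hφ2 z2 i h, h12']
    · obtain ⟨j, rfl⟩ : ∃ j, i = j + n := ⟨i - n, by omega⟩
      rw [← shift_iter_apply, ← shift_iter_apply, z1.2, z2.2]
  unfold nOp
  rw [← ENNReal.tsum_mul_left]
  refine le_trans (ENNReal.tsum_le_tsum fun z => ?_) (ENNReal.tsum_comp_le_tsum_of_injective hinj
    (fun z : {z : MarkovShift A // shift^[n] z = y} =>
      ENNReal.ofReal (Real.exp (β * waltersSup f m)) *
        (ENNReal.ofReal (Real.exp (β * birkhoff f n z.1)) * u z.1)))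
  change _ ≤ ENNReal.ofReal (Real.exp (β * waltersSup f m)) *
        (ENNReal.ofReal (Real.exp (β * birkhoff f n (φ z))) * u (φ z))
  rw [← mul_assoc, ← ENNReal.ofReal_mul (Real.exp_pos _).le, ← Real.exp_add]
  have h1 := walters_bound hW hn hm (hagree z)
  have h2 : u z.1 ≤ u (φ z) := hu _ _ (fun i hi => hagree z i (by omega))
  have h3 : β * birkhoff f n z.1 ≤ β * waltersSup f m + β * birkhoff f n (φ z) := by
    rw [← mul_add]
    exact mul_le_mul_of_nonneg_left h1 hβ
  gcongr

/-- Uniform bound on `L 1`. -/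
theorem nOp_one_bound {A : ℕ → ℕ → Bool} (hbip : FinitelyPrimitive A)
    {f : MarkovShift A → ℝ} (hV : Var1Finite f) {p : ℝ} (hP : HasGurevichPressure f p) :
    ∃ D : ℝ, ∀ β : ℝ, 1 ≤ β → ∀ x : MarkovShift A,
      nOp f β 1 (fun _ => 1) x ≤ ENNReal.ofReal (Real.exp (β * D)) := by
  rcases isEmpty_or_nonempty (MarkovShift A) with hE | ⟨⟨x0⟩⟩
  · exact ⟨0, fun β _ x => hE.elim x⟩
  obtain ⟨n, k, D, hn, hper⟩ := exists_periodic_family hbip hV x0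
  choose q hq1 hq2 hq3 hq4 using hper
  have hsum := (hP _ (admissible_coord x0 0)).1 n hn
  set t : {x : MarkovShift A // shift^[n] x = x ∧ x.1 0 = x0.1 0} → ℝ≥0∞ :=
    fun z => ENNReal.ofReal (Real.exp (D + birkhoff f n z.1)) with ht
  have hT : ∑' z, t z ≠ ∞ := by
    have h1 : Summable fun x : {x : MarkovShift A // shift^[n] x = x ∧ x.1 0 = x0.1 0} =>
        Real.exp (D + birkhoff f n x.1) := by
      simp_rw [Real.exp_add]
      exact hsum.mul_left _
    rw [ht, ← ENNReal.ofReal_tsum_of_nonneg (fun _ => (Real.exp_pos _).le) h1]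
    exact ENNReal.ofReal_ne_top
  obtain ⟨E, hE⟩ : ∃ E : ℝ, ∑' z, t z ≤ ENNReal.ofReal (Real.exp E) := by
    refine ⟨(∑' z, t z).toReal, ?_⟩
    rw [← ENNReal.ofReal_toReal hT]
    refine ENNReal.ofReal_le_ofReal ?_
    rw [ENNReal.ofReal_toReal hT]
    have := Real.add_one_le_exp (∑' z, t z).toReal
    linarith
  refine ⟨E, fun β hβ x => ?_⟩
  have hinj : Function.Injective
      (fun y : {y : MarkovShift A // shift^[1] y = x} =>
        (⟨q y.1, hq1 _, hq2 _⟩ : {x : MarkovShift A // shift^[n] x = x ∧ x.1 0 = x0.1 0})) := by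
    intro y1 y2 h12
    have h12' : q y1.1 = q y2.1 := congrArg Subtype.val h12
    refine Subtype.ext (Subtype.ext (funext fun i => ?_))
    rcases i with _ | i
    · rw [← hq3 y1.1, ← hq3 y2.1, h12']
    · rw [← shift_iter_apply 1, ← shift_iter_apply 1, y1.2, y2.2]
  have hpow : ∀ s : ℝ, ENNReal.ofReal (Real.exp s) ^ β = ENNReal.ofReal (Real.exp (β * s)) := by
    intro s
    rw [ENNReal.ofReal_rpow_of_pos (Real.exp_pos _), ← Real.exp_mul, mul_comm]
  calc nOp f β 1 (fun _ => 1) x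
      ≤ ∑' y : {y : MarkovShift A // shift^[1] y = x}, t ⟨q y.1, hq1 _, hq2 _⟩ ^ β := by
        refine ENNReal.tsum_le_tsum fun y => ?_
        rw [ht]
        simp only
        rw [hpow, mul_one, birkhoff_one]
        have := hq4 y.1
        gcongr
    _ ≤ ∑' z, t z ^ β := ENNReal.tsum_comp_le_tsum_of_injective hinj (fun z => t z ^ β)
    _ ≤ ∑' z, t z * (∑' z, t z) ^ (β - 1) := by
        refine ENNReal.tsum_le_tsum fun z => ?_
        have hb : β = 1 + (β - 1) := by ring
        nth_rewrite 1 [hb]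
        rw [ENNReal.rpow_add_of_nonneg _ _ zero_le_one (by linarith), ENNReal.rpow_one]
        gcongr
        exact ENNReal.le_tsum z
    _ = (∑' z, t z) ^ β := by
        rw [ENNReal.tsum_mul_right]
        have hb : β = 1 + (β - 1) := by ring
        nth_rewrite 2 [hb]
        rw [ENNReal.rpow_add_of_nonneg _ _ zero_le_one (by linarith), ENNReal.rpow_one]
    _ ≤ ENNReal.ofReal (Real.exp E) ^ β := by gcongr
    _ = _ := hpow E

theorem nOp_bound_succ {A : ℕ → ℕ → Bool} {f : MarkovShift A → ℝ} {β D : ℝ}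
    (hD : ∀ x : MarkovShift A, nOp f β 1 (fun _ => 1) x ≤ ENNReal.ofReal (Real.exp (β * D)))
    {u : MarkovShift A → ℝ≥0∞} {B : ℝ≥0∞} (hB : B ≠ ∞) (hu : ∀ x, u x ≤ B) (n : ℕ) :
    ∃ B' : ℝ≥0∞, B' ≠ ∞ ∧ ∀ x, nOp f β n u x ≤ B' := by
  induction n with
  | zero => exact ⟨B, hB, fun x => by rw [nOp_zero]; exact hu x⟩
  | succ n ih =>
    obtain ⟨B', hB', h'⟩ := ih
    refine ⟨B' * ENNReal.ofReal (Real.exp (β * D)), ENNReal.mul_ne_top hB' ENNReal.ofReal_ne_top,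
      fun x => ?_⟩
    rw [nOp_succ]
    calc _ ≤ nOp f β 1 (fun y => B' * (fun _ => 1) y) x :=
            nOp_mono f β 1 (fun y => by simpa using h' y) x
      _ ≤ _ := by rw [nOp_const_mul]; gcongr; exact hD x

theorem isOpen_cylOf {A : ℕ → ℕ → Bool} (x : MarkovShift A) (m : ℕ) : IsOpen (cylOf x m) := by
  have : cylOf x m = ⋂ i ∈ Finset.range m, {y : MarkovShift A | y.1 i = x.1 i} := by
    ext y; simp [cylOf]
  rw [this]
  refine isOpen_biInter_finset fun i _ => ?_
  have hc : Continuous fun y : MarkovShift A => y.1 i :=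
    (continuous_apply i).comp continuous_subtype_val
  exact (isOpen_discrete {x.1 i}).preimage hc

theorem mem_cylOf_self {A : ℕ → ℕ → Bool} (x : MarkovShift A) (m : ℕ) : x ∈ cylOf x m :=
  fun _ _ => rfl

theorem exists_cylOf_subset {A : ℕ → ℕ → Bool} {U : Set (MarkovShift A)} (hU : IsOpen U)
    {x : MarkovShift A} (hx : x ∈ U) : ∃ m, cylOf x m ⊆ U := by
  obtain ⟨W, hW, rfl⟩ := isOpen_induced_iff.1 hU
  obtain ⟨I, v, hv, hsub⟩ := isOpen_pi_iff.1 hW x.1 hx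
  refine ⟨I.sup id + 1, fun y hy => hsub ?_⟩
  intro i hi
  have : y.1 i = x.1 i := hy i (Nat.lt_succ_of_le (Finset.le_sup (f := id) hi))
  rw [this]
  exact (hv i hi).2

/-- Continuity from cylinder estimates. -/
theorem continuous_of_cyl {A : ℕ → ℕ → Bool} {u : MarkovShift A → ℝ}
    (hu : ∀ ε > 0, ∃ m : ℕ, ∀ x y : MarkovShift A, (∀ i < m, x.1 i = y.1 i) → u x - u y < ε) :
    Continuous u := by
  rw [continuous_iff_continuousAt]
  intro x
  refine Metric.continuousAt_iff'.2 fun ε hε => ?_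
  obtain ⟨m, hm⟩ := hu ε hε
  filter_upwards [(isOpen_cylOf x m).mem_nhds (mem_cylOf_self x m)] with y hy
  rw [Real.dist_eq, abs_lt]
  have h1 := hm y x hy
  have h2 := hm x y (fun i hi => (hy i hi).symm)
  constructor <;> linarith

theorem waltersSup_nonneg {A : ℕ → ℕ → Bool} {f : MarkovShift A → ℝ} (hW : SatisfiesWalters f)
    [Nonempty (MarkovShift A)] {m : ℕ} (hm : 1 ≤ m) : 0 ≤ waltersSup f m := by
  obtain ⟨x⟩ := (inferInstance : Nonempty (MarkovShift A))
  have := walters_bound hW (n := 1) le_rfl hm (x := x) (y := x) (fun _ _ => rfl)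
  linarith

theorem nOp_cont {A : ℕ → ℕ → Bool} {f : MarkovShift A → ℝ} (hW : SatisfiesWalters f)
    {β D : ℝ} (hβ : 1 ≤ β)
    (hD : ∀ x : MarkovShift A, nOp f β 1 (fun _ => 1) x ≤ ENNReal.ofReal (Real.exp (β * D)))
    {u : MarkovShift A → ℝ≥0∞} {B : ℝ≥0∞} (hB : B ≠ ∞) (huB : ∀ x, u x ≤ B) {k : ℕ}
    (hu : ∀ z z' : MarkovShift A, (∀ i < k, z.1 i = z'.1 i) → u z ≤ u z') (n : ℕ) :
    Continuous fun x => (nOp f β n u x).toReal := by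
  rcases Nat.eq_zero_or_pos n with rfl | hn
  · simp_rw [nOp_zero]
    refine continuous_of_cyl fun ε hε => ⟨k, fun x y hxy => ?_⟩
    have : (u x).toReal ≤ (u y).toReal :=
      ENNReal.toReal_mono (ne_top_of_le_ne_top hB (huB y)) (hu x y hxy)
    linarith
  · obtain ⟨B', hB', hb⟩ := nOp_bound_succ hD hB huB n
    refine continuous_of_cyl fun ε hε => ?_
    have ht : Tendsto (fun m => (Real.exp (β * waltersSup f m) - 1) * B'.toReal) atTop (𝓝 0) := by
      have h1 : Tendsto (fun m => β * waltersSup f m) atTop (𝓝 (β * 0)) := hW.2.const_mul β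
      have h2 := (Real.continuous_exp.tendsto _).comp h1
      have h3 := (h2.sub_const 1).mul_const B'.toReal
      simpa using h3
    obtain ⟨m, hm1, hm2, hm3⟩ := ((ht.eventually (gt_mem_nhds hε)).and
      ((eventually_ge_atTop 1).and (eventually_ge_atTop k))).exists
    refine ⟨m, fun x y hxy => ?_⟩
    have hne : ∀ x, nOp f β n u x ≠ ∞ := fun x => ne_top_of_le_ne_top hB' (hb x)
    have hd := nOp_distortion hW (by linarith : (0:ℝ) ≤ β) hn hm2 (by omega : k ≤ n + m) hu hxy
    have hd' := ENNReal.toReal_mono (ENNReal.mul_ne_top ENNReal.ofReal_ne_top (hne y)) hd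
    rw [ENNReal.toReal_mul, ENNReal.toReal_ofReal (Real.exp_pos _).le] at hd'
    have hy : (nOp f β n u y).toReal ≤ B'.toReal := ENNReal.toReal_mono hB' (hb y)
    have : Nonempty (MarkovShift A) := ⟨x⟩
    have hE : 0 ≤ Real.exp (β * waltersSup f m) - 1 := by
      have := Real.one_le_exp (mul_nonneg (by linarith : (0:ℝ) ≤ β) (waltersSup_nonneg hW hm2))
      linarith
    have := mul_le_mul_of_nonneg_left hy hE
    linarith

theorem ruelle_toReal {A : ℕ → ℕ → Bool} (f : MarkovShift A → ℝ) (β : ℝ)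
    {u : MarkovShift A → ℝ≥0∞} (hu : ∀ x, u x ≠ ∞) (x : MarkovShift A) :
    ruelle (fun x => β * f x) (fun x => (u x).toReal) x = (nOp f β 1 u x).toReal := by
  unfold nOp
  rw [ENNReal.tsum_toReal_eq (fun z => ENNReal.mul_ne_top ENNReal.ofReal_ne_top (hu _))]
  unfold ruelle
  refine tsum_congr fun z => ?_
  rw [ENNReal.toReal_mul, ENNReal.toReal_ofReal (Real.exp_pos _).le, birkhoff_one]

theorem nOp_eig {A : ℕ → ℕ → Bool} {f : MarkovShift A → ℝ} {β p : ℝ}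
    {h : MarkovShift A → ℝ} {ν : Measure (MarkovShift A)}
    (hR : IsRPF (fun x => β * f x) p h ν) (n : ℕ) (x : MarkovShift A) :
    nOp f β n (fun y => ENNReal.ofReal (h y)) x =
      ENNReal.ofReal (Real.exp p) ^ n * ENNReal.ofReal (h x) := by
  induction n generalizing x with
  | zero => simp [nOp_zero]
  | succ n ih =>
    rw [nOp_succ, funext ih, nOp_const_mul]
    have h1 := ruelle_toReal f β (u := fun y => ENNReal.ofReal (h y))
      (fun _ => ENNReal.ofReal_ne_top) x
    have h2 : (fun y => (ENNReal.ofReal (h y)).toReal) = h :=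
      funext fun y => ENNReal.toReal_ofReal (hR.2.1 y).le
    rw [h2, hR.2.2.1 x] at h1
    have hpos : 0 < Real.exp p * h x := mul_pos (Real.exp_pos _) (hR.2.1 x)
    have hne : nOp f β 1 (fun y => ENNReal.ofReal (h y)) x ≠ ∞ := by
      intro htop
      rw [htop] at h1
      simp at h1
      exact (hR.2.1 x).ne' h1
    rw [← ENNReal.ofReal_toReal hne, ← h1, ENNReal.ofReal_mul (Real.exp_pos _).le]
    ring

theorem nOp_dual {A : ℕ → ℕ → Bool} {f : MarkovShift A → ℝ} (hW : SatisfiesWalters f)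
    {β D : ℝ} (hβ : 1 ≤ β)
    (hD : ∀ x : MarkovShift A, nOp f β 1 (fun _ => 1) x ≤ ENNReal.ofReal (Real.exp (β * D)))
    {p : ℝ} {h : MarkovShift A → ℝ} {ν : Measure (MarkovShift A)}
    (hR : IsRPF (fun x => β * f x) p h ν)
    {u : MarkovShift A → ℝ≥0∞} {B : ℝ≥0∞} (hB : B ≠ ∞) (huB : ∀ x, u x ≤ B) {k : ℕ}
    (hu : ∀ z z' : MarkovShift A, (∀ i < k, z.1 i = z'.1 i) → u z ≤ u z') (n : ℕ) :
    ∫⁻ x, nOp f β n u x ∂ν = ENNReal.ofReal (Real.exp p) ^ n * ∫⁻ x, u x ∂ν := by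
  have hprob : IsProbabilityMeasure ν := hR.2.2.2.1
  have hfin : ∀ n x, nOp f β n u x ≠ ∞ := fun n x => by
    obtain ⟨B', hB', hb⟩ := nOp_bound_succ hD hB huB n
    exact ne_top_of_le_ne_top hB' (hb x)
  have hmeas : ∀ n, Measurable (nOp f β n u) := fun n => by
    have := (nOp_cont hW hβ hD hB huB hu n).measurable.ennreal_ofReal
    simpa only [ENNReal.ofReal_toReal (hfin n _)] using this
  have hlfin : ∀ n, ∫⁻ x, nOp f β n u x ∂ν ≠ ∞ := fun n => by
    obtain ⟨B', hB', hb⟩ := nOp_bound_succ hD hB huB n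
    refine ne_top_of_le_ne_top hB' ?_
    calc _ ≤ ∫⁻ _, B' ∂ν := lintegral_mono hb
      _ = B' := by simp
  induction n with
  | zero => simp [nOp_zero]
  | succ n ih =>
    obtain ⟨B', hB', hb⟩ := nOp_bound_succ hD hB huB n
    have h1 := hR.2.2.2.2.1 (fun x => (nOp f β n u x).toReal) (nOp_cont hW hβ hD hB huB hu n)
      ⟨B'.toReal, fun x => by
        rw [abs_of_nonneg ENNReal.toReal_nonneg]
        exact ENNReal.toReal_mono hB' (hb x)⟩
    simp_rw [ruelle_toReal f β (hfin n), ← nOp_succ] at h1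
    rw [integral_toReal (hmeas _).aemeasurable (ae_of_all _ fun x => (hfin _ x).lt_top),
      integral_toReal (hmeas _).aemeasurable (ae_of_all _ fun x => (hfin _ x).lt_top)] at h1
    rw [← ENNReal.ofReal_toReal (hlfin (n + 1)), h1, ENNReal.ofReal_mul (Real.exp_pos _).le,
      ENNReal.ofReal_toReal (hlfin n), ih]
    ring

theorem lam_bound {A : ℕ → ℕ → Bool} {f : MarkovShift A → ℝ} (hW : SatisfiesWalters f)
    {β D : ℝ} (hβ : 1 ≤ β)
    (hD : ∀ x : MarkovShift A, nOp f β 1 (fun _ => 1) x ≤ ENNReal.ofReal (Real.exp (β * D)))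
    {p : ℝ} {h : MarkovShift A → ℝ} {ν : Measure (MarkovShift A)}
    (hR : IsRPF (fun x => β * f x) p h ν) : p ≤ β * D := by
  have hprob : IsProbabilityMeasure ν := hR.2.2.2.1
  have h1 := nOp_dual hW hβ hD hR (u := fun _ => 1) (B := 1) ENNReal.one_ne_top
    (fun _ => le_rfl) (k := 0) (fun _ _ _ => le_rfl) 1
  have h2 : ∫⁻ x, nOp f β 1 (fun _ => 1) x ∂ν ≤ ENNReal.ofReal (Real.exp (β * D)) := by
    calc _ ≤ ∫⁻ _, ENNReal.ofReal (Real.exp (β * D)) ∂ν := lintegral_mono hD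
      _ = _ := by simp
  rw [h1] at h2
  simp only [pow_one, lintegral_const, measure_univ, mul_one] at h2
  exact Real.exp_le_exp.1 ((ENNReal.ofReal_le_ofReal_iff (Real.exp_pos _).le).1 h2)

/-- The eigenmeasure has full support. -/
theorem full_support {A : ℕ → ℕ → Bool} (hbip : FinitelyPrimitive A)
    {f : MarkovShift A → ℝ} (hW : SatisfiesWalters f)
    {β D : ℝ} (hβ : 1 ≤ β)
    (hD : ∀ x : MarkovShift A, nOp f β 1 (fun _ => 1) x ≤ ENNReal.ofReal (Real.exp (β * D)))
    {p : ℝ} {h : MarkovShift A → ℝ} {ν : Measure (MarkovShift A)}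
    (hR : IsRPF (fun x => β * f x) p h ν) {U : Set (MarkovShift A)} (hU : IsOpen U)
    (hν : ν U = 0) : U = ∅ := by
  have hprob : IsProbabilityMeasure ν := hR.2.2.2.1
  by_contra hne
  obtain ⟨x, hx⟩ := Set.nonempty_iff_ne_empty.2 hne
  obtain ⟨m, hm⟩ := exists_cylOf_subset hU hx
  have hC : ν (cylOf x m) = 0 := measure_mono_null hm hν
  obtain ⟨K, F, hF⟩ := bip_fun hbip
  classical
  set u : MarkovShift A → ℝ≥0∞ := (cylOf x m).indicator 1 with hudef
  have huB : ∀ z, u z ≤ 1 := fun z => Set.indicator_le_self' (fun _ _ => zero_le) z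
  have hu : ∀ z z' : MarkovShift A, (∀ i < m, z.1 i = z'.1 i) → u z ≤ u z' := by
    intro z z' hzz
    by_cases hz : z ∈ cylOf x m
    · have hz' : z' ∈ cylOf x m := fun i hi => (hzz i hi).symm.trans (hz i hi)
      simp [hudef, hz, hz']
    · simp [hudef, hz]
  have h1 := nOp_dual hW hβ hD hR (u := u) ENNReal.one_ne_top huB hu (m + (K + 1))
  have h0 : ∫⁻ z, u z ∂ν = 0 := by
    rw [hudef, lintegral_indicator_one (isOpen_cylOf x m).measurableSet, hC]
  rw [h0, mul_zero] at h1
  have hpos : ∀ y, nOp f β (m + (K + 1)) u y ≠ 0 := by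
    intro y
    obtain ⟨w, hw0, hwb, hwA, -⟩ := hF _ _ (admissible_coord x m) (admissible_coord y 0)
    obtain ⟨z1, hz1, hz1'⟩ := exists_glue w (K + 1) y hwA hwb
    obtain ⟨z, hz, hz'⟩ := exists_glue x.1 m z1 (fun i _ => x.2 i)
      (by rw [hz1' 0 (by omega), hw0])
    have hzy : shift^[m + (K + 1)] z = y := by
      rw [add_comm, Function.iterate_add_apply, hz, hz1]
    have hzC : z ∈ cylOf x m := hz'
    intro hzero
    have hle := ENNReal.le_tsum (f := fun z : {z : MarkovShift A // shift^[m + (K + 1)] z = y} =>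
      ENNReal.ofReal (Real.exp (β * birkhoff f (m + (K + 1)) z.1)) * u z.1) ⟨z, hzy⟩
    change _ ≤ nOp f β (m + (K + 1)) u y at hle
    rw [hzero] at hle
    simp only [hudef, Set.indicator_of_mem hzC, Pi.one_apply, mul_one, nonpos_iff_eq_zero,
      ENNReal.ofReal_eq_zero] at hle
    exact absurd hle (not_le.2 (Real.exp_pos _))
  have hfin : ∀ n x, nOp f β n u x ≠ ∞ := fun n x => by
    obtain ⟨B', hB', hb⟩ := nOp_bound_succ hD ENNReal.one_ne_top huB n
    exact ne_top_of_le_ne_top hB' (hb x)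
  have hmeas : ∀ n, Measurable (nOp f β n u) := fun n => by
    have := (nOp_cont hW hβ hD ENNReal.one_ne_top huB hu n).measurable.ennreal_ofReal
    simpa only [ENNReal.ofReal_toReal (hfin n _)] using this
  rw [lintegral_eq_zero_iff (hmeas _)] at h1
  obtain ⟨y, hy⟩ := h1.exists
  exact hpos y hy

/-- Regularity of the eigenfunction. -/
theorem eig_regular {A : ℕ → ℕ → Bool} (hbip : FinitelyPrimitive A)
    {f : MarkovShift A → ℝ} (hW : SatisfiesWalters f)
    {β D : ℝ} (hβ : 1 ≤ β)
    (hD : ∀ x : MarkovShift A, nOp f β 1 (fun _ => 1) x ≤ ENNReal.ofReal (Real.exp (β * D)))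
    {p : ℝ} {h : MarkovShift A → ℝ} {ν : Measure (MarkovShift A)}
    (hR : IsRPF (fun x => β * f x) p h ν) {m : ℕ} (hm : 1 ≤ m) {x y : MarkovShift A}
    (hxy : ∀ i < m, x.1 i = y.1 i) :
    h x ≤ Real.exp (β * waltersSup f m) * h y := by
  have hprob : IsProbabilityMeasure ν := hR.2.2.2.1
  have hIntegrable : Integrable h ν := by
    by_contra hni
    have := hR.2.2.2.2.2
    rw [integral_undef hni] at this
    exact zero_ne_one this
  set H : MarkovShift A → ℝ≥0∞ := fun z => ENNReal.ofReal (h z) with hH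
  have hHc : Continuous H := ENNReal.continuous_ofReal.comp hR.1
  have hH1 : ∫⁻ z, H z ∂ν = 1 := by
    rw [hH, ← ofReal_integral_eq_lintegral_ofReal hIntegrable (ae_of_all _ fun z => (hR.2.1 z).le),
      hR.2.2.2.2.2, ENNReal.ofReal_one]
  -- locally constant approximations from below
  set g : ℕ → MarkovShift A → ℝ≥0∞ := fun k z => ⨅ z' ∈ cylOf z k, min (H z') k with hg
  have hgB : ∀ k z, g k z ≤ k := fun k z =>
    (iInf₂_le z (mem_cylOf_self z k)).trans (min_le_right _ _)
  have hgH : ∀ k z, g k z ≤ H z := fun k z =>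
    (iInf₂_le z (mem_cylOf_self z k)).trans (min_le_left _ _)
  have hgu : ∀ k, ∀ z z' : MarkovShift A, (∀ i < k, z.1 i = z'.1 i) → g k z ≤ g k z' := by
    intro k z z' hzz
    refine le_iInf₂ fun v hv => iInf₂_le v ?_
    exact fun i hi => (hv i hi).trans (hzz i hi).symm
  have hgmono : ∀ z, Monotone fun k => g k z := by
    intro z k l hkl
    refine le_iInf₂ fun v hv => (iInf₂_le v ?_).trans ?_
    · exact fun i hi => hv i (by omega)
    · gcongr
  have hgtend : ∀ z, Tendsto (fun k => g k z) atTop (𝓝 (H z)) := by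
    intro z
    refine tendsto_order.2 ⟨fun a ha => ?_, fun a ha =>
      Eventually.of_forall fun k => (hgH k z).trans_lt ha⟩
    obtain ⟨b, hab, hbH⟩ := exists_between ha
    obtain ⟨k0, hk0⟩ := exists_cylOf_subset (hHc.isOpen_preimage _ isOpen_Ioi)
      (show z ∈ H ⁻¹' Set.Ioi b from hbH)
    have hbt : b ≠ ∞ := hbH.ne_top
    obtain ⟨k1, hk1⟩ := ENNReal.exists_nat_gt hbt
    filter_upwards [eventually_ge_atTop k0, eventually_ge_atTop k1] with k h0 h1
    refine hab.trans_le (le_iInf₂ fun v hv => le_min ?_ ?_)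
    · exact (hk0 (show v ∈ cylOf z k0 from fun i hi => hv i (by omega))).le
    · exact hk1.le.trans (by exact_mod_cast h1)
  have hgmeas : ∀ k, Measurable (g k) := by
    intro k
    have := (nOp_cont hW hβ hD (ENNReal.natCast_ne_top k) (hgB k) (hgu k) 0).measurable.ennreal_ofReal
    simpa only [nOp_zero, ENNReal.ofReal_toReal
      (ne_top_of_le_ne_top (ENNReal.natCast_ne_top k) (hgB k _))] using this
  have hlim : Tendsto (fun k => ∫⁻ z, g k z ∂ν) atTop (𝓝 (∫⁻ z, H z ∂ν)) :=
    lintegral_tendsto_of_tendsto_of_monotone (fun k => (hgmeas k).aemeasurable)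
      (ae_of_all _ hgmono) (ae_of_all _ hgtend)
  set c : ℝ≥0∞ := ENNReal.ofReal (Real.exp (β * waltersSup f m)) * H y with hc
  classical
  set H' : MarkovShift A → ℝ≥0∞ := fun z => if z ∈ cylOf y m then min (H z) c else H z with hH'
  have hl0 : ENNReal.ofReal (Real.exp p) ≠ 0 := by
    rw [Ne, ENNReal.ofReal_eq_zero, not_le]; exact Real.exp_pos _
  have hub : ∀ k, 1 ≤ k → ∫⁻ z, g k z ∂ν ≤ ∫⁻ z, H' z ∂ν := by
    intro k hk
    have hd := nOp_dual hW hβ hD hR (ENNReal.natCast_ne_top k) (hgB k) (hgu k) k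
    have hle : ∀ z, nOp f β k (g k) z ≤ ENNReal.ofReal (Real.exp p) ^ k * H z := by
      intro z
      rw [← nOp_eig hR k z]
      exact nOp_mono f β k (hgH k) z
    have hle' : ∀ z, nOp f β k (g k) z ≤ ENNReal.ofReal (Real.exp p) ^ k * H' z := by
      intro z
      by_cases hz : z ∈ cylOf y m
      · rw [hH']
        simp only [hz, if_true]
        rw [mul_min]
        refine le_min (hle z) ?_
        have := nOp_distortion hW (by linarith : (0:ℝ) ≤ β) hk hm (by omega : k ≤ k + m) (hgu k) hz
        refine this.trans ?_
        rw [hc, mul_left_comm]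
        gcongr
        exact hle y
      · rw [hH']
        simp only [hz, if_false]
        exact hle z
    have h2 : ENNReal.ofReal (Real.exp p) ^ k * ∫⁻ z, g k z ∂ν ≤
        ENNReal.ofReal (Real.exp p) ^ k * ∫⁻ z, H' z ∂ν := by
      rw [← hd, ← lintegral_const_mul' _ _ (ENNReal.pow_ne_top ENNReal.ofReal_ne_top)]
      exact lintegral_mono hle'
    exact (ENNReal.mul_le_mul_iff_right (pow_ne_zero _ hl0)
      (ENNReal.pow_ne_top ENNReal.ofReal_ne_top)).1 h2
  have hHH' : ∫⁻ z, H z ∂ν ≤ ∫⁻ z, H' z ∂ν :=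
    le_of_tendsto hlim ((eventually_ge_atTop 1).mono hub)
  have hH'le : ∀ z, H' z ≤ H z := by
    intro z
    by_cases hz : z ∈ cylOf y m
    · simp [hH', hz]
    · simp [hH', hz]
  have hae : H' =ᵐ[ν] H := by
    refine ae_eq_of_ae_le_of_lintegral_le (ae_of_all _ hH'le) ?_ hHc.measurable.aemeasurable hHH'
    exact ne_top_of_le_ne_top (by rw [hH1]; exact ENNReal.one_ne_top) (lintegral_mono hH'le)
  have hUo : IsOpen (H ⁻¹' Set.Ioi c ∩ cylOf y m) :=
    (hHc.isOpen_preimage _ isOpen_Ioi).inter (isOpen_cylOf y m)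
  have hU0 : ν (H ⁻¹' Set.Ioi c ∩ cylOf y m) = 0 := by
    refine measure_mono_null ?_ (ae_iff.1 hae)
    rintro z ⟨hz1, hz2⟩
    have hz1' : c < H z := hz1
    change ¬ (H' z = H z)
    simp only [hH', hz2, if_true]
    rw [min_eq_right hz1'.le]
    exact hz1'.ne
  have hUe := full_support hbip hW hβ hD hR hUo hU0
  have hx : H x ≤ c := by
    by_contra hlt
    have : x ∈ H ⁻¹' Set.Ioi c ∩ cylOf y m := ⟨not_le.1 hlt, hxy⟩
    rw [hUe] at this
    exact this
  rw [hc, hH, ← ENNReal.ofReal_mul (Real.exp_pos _).le] at hx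
  exact (ENNReal.ofReal_le_ofReal_iff (mul_pos (Real.exp_pos _) (hR.2.1 y)).le).1 hx

/-- Global oscillation bound for the eigenfunctions. -/
theorem eig_osc {A : ℕ → ℕ → Bool} (hbip : FinitelyPrimitive A)
    {f : MarkovShift A → ℝ} (hW : SatisfiesWalters f) (hV : Var1Finite f) {D : ℝ}
    (hD : ∀ β : ℝ, 1 ≤ β → ∀ x : MarkovShift A,
      nOp f β 1 (fun _ => 1) x ≤ ENNReal.ofReal (Real.exp (β * D))) :
    ∃ E : ℝ, ∀ (β p : ℝ) (h : MarkovShift A → ℝ) (ν : Measure (MarkovShift A)), 1 ≤ β →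
      IsRPF (fun x => β * f x) p h ν → ∀ x y, h x ≤ Real.exp (β * E) * h y := by
  obtain ⟨K, F, hF⟩ := bip_fun hbip
  obtain ⟨V, hV0, hVb⟩ := var1_bound hV
  obtain ⟨c, hc0, hc⟩ := finite_lower hV F
  refine ⟨V + K * c + waltersSup f 1 + K * D, fun β p h ν hβ hR x y => ?_⟩
  have hβ0 : 0 ≤ β := by linarith
  have hex : ∀ z : {z : MarkovShift A // shift^[1] z = x}, ∃ z' : MarkovShift A,
      shift^[K + 1] z' = y ∧ z'.1 0 = z.1.1 0 ∧ f z.1 ≤ V + K * c + birkhoff f (K + 1) z' := by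
    intro z
    obtain ⟨w, hw0, hwb, hwA, hwF⟩ := hF _ _ (admissible_coord z.1 0) (admissible_coord y 0)
    obtain ⟨z1, hz1, hz1'⟩ := exists_glue w (K + 1) y hwA hwb
    have hz0 : z1.1 0 = z.1.1 0 := (hz1' 0 (by omega)).trans hw0
    refine ⟨z1, hz1, hz0, ?_⟩
    have hb : birkhoff f (K + 1) z1 = ∑ j ∈ Finset.range K, f (shift^[j + 1] z1) + f z1 := by
      unfold birkhoff
      rw [Finset.sum_range_succ']
      rfl
    have hs : ∑ j ∈ Finset.range K, (-c) ≤ ∑ j ∈ Finset.range K, f (shift^[j + 1] z1) := by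
      refine Finset.sum_le_sum fun j hj => hc _ ?_
      have hj' := Finset.mem_range.1 hj
      rw [shift_iter_apply, zero_add, hz1' _ (by omega)]
      exact hwF _ (by omega) (by omega)
    rw [Finset.sum_const, Finset.card_range, nsmul_eq_mul] at hs
    have := hVb z.1 z1 hz0.symm
    rw [hb]
    linarith
  choose ψ hψ1 hψ2 hψ3 using hex
  have hinj : Function.Injective
      (fun z : {z : MarkovShift A // shift^[1] z = x} =>
        (⟨ψ z, hψ1 z⟩ : {z : MarkovShift A // shift^[K + 1] z = y})) := by
    intro z1 z2 h12
    have h12' : ψ z1 = ψ z2 := congrArg Subtype.val h12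
    refine Subtype.ext (Subtype.ext (funext fun i => ?_))
    rcases i with _ | i
    · rw [← hψ2 z1, ← hψ2 z2, h12']
    · rw [← shift_iter_apply 1, ← shift_iter_apply 1, z1.2, z2.2]
  have hmain : nOp f β 1 (fun y => ENNReal.ofReal (h y)) x ≤
      ENNReal.ofReal (Real.exp (β * (V + K * c + waltersSup f 1))) *
        nOp f β (K + 1) (fun y => ENNReal.ofReal (h y)) y := by
    unfold nOp
    rw [← ENNReal.tsum_mul_left]
    refine le_trans (ENNReal.tsum_le_tsum fun z => ?_) (ENNReal.tsum_comp_le_tsum_of_injective hinj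
      (fun z : {z : MarkovShift A // shift^[K + 1] z = y} =>
        ENNReal.ofReal (Real.exp (β * (V + K * c + waltersSup f 1))) *
          (ENNReal.ofReal (Real.exp (β * birkhoff f (K + 1) z.1)) * ENNReal.ofReal (h z.1))))
    change _ ≤ ENNReal.ofReal (Real.exp (β * (V + K * c + waltersSup f 1))) *
          (ENNReal.ofReal (Real.exp (β * birkhoff f (K + 1) (ψ z))) * ENNReal.ofReal (h (ψ z)))
    have hreg := eig_regular hbip hW hβ (hD β hβ) hR (m := 1) le_rfl (x := z.1) (y := ψ z)
      (fun i hi => by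
        obtain rfl : i = 0 := by omega
        exact (hψ2 z).symm)
    rw [← ENNReal.ofReal_mul (Real.exp_pos _).le, ← ENNReal.ofReal_mul (Real.exp_pos _).le,
      ← ENNReal.ofReal_mul (Real.exp_pos _).le, birkhoff_one]
    refine ENNReal.ofReal_le_ofReal ?_
    have h1 : Real.exp (β * f z.1) ≤ Real.exp (β * (V + K * c + birkhoff f (K + 1) (ψ z))) :=
      Real.exp_le_exp.2 (mul_le_mul_of_nonneg_left (hψ3 z) hβ0)
    calc _ ≤ Real.exp (β * (V + K * c + birkhoff f (K + 1) (ψ z))) *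
            (Real.exp (β * waltersSup f 1) * h (ψ z)) :=
          mul_le_mul h1 hreg (hR.2.1 _).le (Real.exp_pos _).le
      _ = _ := by
          rw [← mul_assoc, ← mul_assoc, ← Real.exp_add, ← Real.exp_add]
          congr 2
          ring
  rw [nOp_eig hR, nOp_eig hR, ← ENNReal.ofReal_pow (Real.exp_pos _).le,
    ← ENNReal.ofReal_pow (Real.exp_pos _).le, ← ENNReal.ofReal_mul (by positivity),
    ← ENNReal.ofReal_mul (by positivity), ← ENNReal.ofReal_mul (by positivity),
    ENNReal.ofReal_le_ofReal_iff (by have := hR.2.1 y; positivity)] at hmain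
  have hp := lam_bound hW hβ (hD β hβ) hR
  have h2 : Real.exp p * h x ≤ Real.exp p *
      (Real.exp (β * (V + K * c + waltersSup f 1)) * (Real.exp p ^ K * h y)) := by
    calc _ = Real.exp p ^ 1 * h x := by rw [pow_one]
      _ ≤ _ := hmain
      _ = _ := by ring
  have h3 := le_of_mul_le_mul_left h2 (Real.exp_pos _)
  refine h3.trans ?_
  rw [← mul_assoc]
  refine mul_le_mul_of_nonneg_right ?_ (hR.2.1 y).le
  rw [← Real.exp_nat_mul, ← Real.exp_add, Real.exp_le_exp]
  have : (K : ℝ) * p ≤ K * (β * D) := mul_le_mul_of_nonneg_left hp (Nat.cast_nonneg _)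
  linarith

theorem eig_bounds {A : ℕ → ℕ → Bool} {f : MarkovShift A → ℝ} {β p E : ℝ}
    {h : MarkovShift A → ℝ} {ν : Measure (MarkovShift A)} (hβ : 1 ≤ β)
    (hR : IsRPF (fun x => β * f x) p h ν)
    (hE : ∀ x y, h x ≤ Real.exp (β * E) * h y) (x : MarkovShift A) :
    |(1 / β) * Real.log (h x)| ≤ E := by
  have hprob : IsProbabilityMeasure ν := hR.2.2.2.1
  have h1 := hR.2.2.2.2.2
  have hIntegrable : Integrable h ν := by
    by_contra hni
    rw [integral_undef hni] at h1
    exact zero_ne_one h1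
  have hβ0 : 0 < β := by linarith
  have hup : h x ≤ Real.exp (β * E) := by
    have : ∫ _, h x ∂ν ≤ ∫ y, Real.exp (β * E) * h y ∂ν :=
      integral_mono (integrable_const _) (hIntegrable.const_mul _) (fun y => hE x y)
    rw [integral_const_mul, h1] at this
    simpa using this
  have hlo : 1 ≤ Real.exp (β * E) * h x := by
    have : ∫ y, h y ∂ν ≤ ∫ _, Real.exp (β * E) * h x ∂ν :=
      integral_mono hIntegrable (integrable_const _) (fun y => hE y x)
    rw [h1] at this
    simpa using this
  have l1 : Real.log (h x) ≤ β * E := by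
    rw [← Real.log_exp (β * E)]
    exact Real.log_le_log (hR.2.1 x) hup
  have l2 : 0 ≤ β * E + Real.log (h x) := by
    have := Real.log_nonneg hlo
    rwa [Real.log_mul (Real.exp_pos _).ne' (hR.2.1 x).ne', Real.log_exp] at this
  rw [one_div, abs_le]
  constructor
  · rw [← mul_le_mul_iff_right₀ hβ0, mul_inv_cancel_left₀ hβ0.ne']
    linarith
  · rw [← mul_le_mul_iff_right₀ hβ0, mul_inv_cancel_left₀ hβ0.ne']
    linarith

/-- A diagonal Arzelà–Ascoli argument. -/
theorem subseq_converges {A : ℕ → ℕ → Bool} [Nonempty (MarkovShift A)]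
    (W : ℕ → MarkovShift A → ℝ) (C : ℝ) (hC : ∀ i x, |W i x| ≤ C)
    (hE : ∀ ε > 0, ∃ m : ℕ, ∀ i, ∀ x y : MarkovShift A, (∀ j < m, x.1 j = y.1 j) →
      |W i x - W i y| ≤ ε) :
    ∃ (φ : ℕ → ℕ) (V : MarkovShift A → ℝ), StrictMono φ ∧
      ∀ K : Set (MarkovShift A), IsCompact K →
        TendstoUniformlyOn (fun i x => W (φ i) x) V atTop K := by
  have hsec : SecondCountableTopology (MarkovShift A) :=
    TopologicalSpace.Subtype.secondCountableTopology
      {x : ℕ → ℕ | ∀ i, A (x i) (x (i + 1)) = true}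
  have hsep : TopologicalSpace.SeparableSpace (MarkovShift A) := inferInstance
  obtain ⟨d, hd⟩ := TopologicalSpace.exists_dense_seq (MarkovShift A)
  have hcomp : IsCompact (Set.univ.pi fun _ : ℕ => Set.Icc (-C) C) :=
    isCompact_univ_pi fun _ => isCompact_Icc
  obtain ⟨a, -, φ, hφ, hlim⟩ := hcomp.tendsto_subseq (x := fun i n => W i (d n))
    (fun i n _ => abs_le.1 (hC i (d n)))
  rw [tendsto_pi_nhds] at hlim
  have hcyl : ∀ (x : MarkovShift A) (m : ℕ), ∃ n, d n ∈ cylOf x m := fun x m =>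
    hd.exists_mem_open (isOpen_cylOf x m) ⟨x, mem_cylOf_self x m⟩
  have hpt : ∀ x, ∃ v, Tendsto (fun i => W (φ i) x) atTop (𝓝 v) := by
    intro x
    refine cauchySeq_tendsto_of_complete (Metric.cauchySeq_iff.2 fun ε hε => ?_)
    obtain ⟨m, hm⟩ := hE (ε / 4) (by positivity)
    obtain ⟨n, hn⟩ := hcyl x m
    obtain ⟨N, hN⟩ := Metric.cauchySeq_iff.1 (hlim n).cauchySeq (ε / 4) (by positivity)
    refine ⟨N, fun i hi j hj => ?_⟩
    have h1 := hN i hi j hj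
    have h2 := hm (φ i) (d n) x hn
    have h3 := hm (φ j) (d n) x hn
    simp only [Function.comp_apply] at h1
    rw [Real.dist_eq, abs_lt] at *
    rw [abs_le] at h2 h3
    constructor <;> linarith
  choose V hV using hpt
  refine ⟨φ, V, hφ, fun K hK => Metric.tendstoUniformlyOn_iff.2 fun ε hε => ?_⟩
  obtain ⟨m, hm⟩ := hE (ε / 4) (by positivity)
  have hVm : ∀ x y : MarkovShift A, (∀ j < m, x.1 j = y.1 j) → |V x - V y| ≤ ε / 4 :=
    fun x y hxy => le_of_tendsto ((hV x).sub (hV y)).abs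
      (Eventually.of_forall fun i => hm (φ i) x y hxy)
  obtain ⟨t, -, ht⟩ := hK.elim_nhds_subcover (fun x => cylOf x m)
    (fun x _ => (isOpen_cylOf x m).mem_nhds (mem_cylOf_self x m))
  have hev : ∀ᶠ i in atTop, ∀ y ∈ t, |W (φ i) y - V y| < ε / 4 := by
    rw [Filter.eventually_all_finset]
    intro y _
    have := Metric.tendsto_nhds.1 (hV y) (ε / 4) (by positivity)
    simpa only [Real.dist_eq] using this
  filter_upwards [hev] with i hi x hx
  obtain ⟨y, hy, hxy⟩ := Set.mem_iUnion₂.1 (ht hx)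
  have h1 := hi y hy
  have h2 := hm (φ i) x y hxy
  have h3 := hVm x y hxy
  rw [Real.dist_eq]
  rw [abs_lt] at *
  rw [abs_le] at h2 h3
  constructor <;> linarith

theorem agree_of_dist {A : ℕ → ℕ → Bool} {r : ℝ} (hr0 : 0 < r) (hr1 : r < 1) {m : ℕ}
    {x y : MarkovShift A} (hd : dist' r x y < r ^ m) : ∀ i < m, x.1 i = y.1 i := by
  intro i hi
  by_cases hxy : x = y
  · rw [hxy]
  · unfold dist' at hd
    rw [dif_neg hxy] at hd
    have hlt : m < firstDiff x y hxy := (pow_lt_pow_iff_right_of_lt_one₀ hr0 hr1).1 hd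
    unfold firstDiff at hlt
    by_contra hne
    have := Nat.find_min' (Function.ne_iff.mp
      (fun hxy' : x.1 = y.1 => hxy (Subtype.ext hxy'))) hne
    omega

/-- The family `V_β = (1/β) log h_β`, `β ≥ 1`, is uniformly bounded and equicontinuous;
in particular some sequence `V_{β_i}` with `β_i → ∞` converges uniformly on every
compact subset. -/
theorem log_eigenfunctions_equicontinuous
    (A : ℕ → ℕ → Bool) (r : ℝ) (hr0 : 0 < r) (hr1 : r < 1)
    (hmix : TopologicallyMixing A)
    (hbip : FinitelyPrimitive A)
    (f : MarkovShift A → ℝ)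
    (hWalters : SatisfiesWalters f)
    (hVar1 : Var1Finite f)
    (P : ℝ → ℝ)
    (hPfin : HasGurevichPressure f (P 1))
    (h : ℝ → MarkovShift A → ℝ)
    (ν : ℝ → Measure (MarkovShift A))
    (hRPF : ∀ β : ℝ, 1 ≤ β → IsRPF (fun x => β * f x) (P β) (h β) (ν β)) :
    (∃ C : ℝ, ∀ β : ℝ, 1 ≤ β → ∀ x : MarkovShift A,
        |(1 / β) * Real.log (h β x)| ≤ C) ∧
      (∀ ε : ℝ, 0 < ε → ∃ δ : ℝ, 0 < δ ∧ ∀ β : ℝ, 1 ≤ β → ∀ x y : MarkovShift A,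
        dist' r x y < δ →
          |(1 / β) * Real.log (h β x) - (1 / β) * Real.log (h β y)| < ε) ∧
      (∃ (βs : ℕ → ℝ) (V : MarkovShift A → ℝ), (∀ i, 1 ≤ βs i) ∧
        Tendsto βs atTop atTop ∧
        ∀ K : Set (MarkovShift A), IsCompact K →
          TendstoUniformlyOn (fun i x => (1 / βs i) * Real.log (h (βs i) x)) V atTop K) := by
  have hprob : IsProbabilityMeasure (ν 1) := (hRPF 1 le_rfl).2.2.2.1
  have hne : Nonempty (MarkovShift A) := nonempty_of_isProbabilityMeasure (ν 1)
  obtain ⟨D, hD⟩ := nOp_one_bound hbip hVar1 hPfin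
  obtain ⟨E, hE⟩ := eig_osc hbip hWalters hVar1 hD
  have hbd : ∀ β : ℝ, 1 ≤ β → ∀ x : MarkovShift A, |(1 / β) * Real.log (h β x)| ≤ E :=
    fun β hβ x => eig_bounds hβ (hRPF β hβ) (hE β _ _ _ hβ (hRPF β hβ)) x
  have hone : ∀ m : ℕ, 1 ≤ m → ∀ β : ℝ, 1 ≤ β → ∀ x y : MarkovShift A,
      (∀ i < m, x.1 i = y.1 i) →
      (1 / β) * Real.log (h β x) - (1 / β) * Real.log (h β y) ≤ waltersSup f m := by
    intro m hm β hβ x y hxy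
    have hβ0 : 0 < β := by linarith
    have hreg := eig_regular hbip hWalters hβ (hD β hβ) (hRPF β hβ) hm hxy
    have hlog := Real.log_le_log ((hRPF β hβ).2.1 x) hreg
    rw [Real.log_mul (Real.exp_pos _).ne' ((hRPF β hβ).2.1 y).ne', Real.log_exp] at hlog
    rw [← mul_sub, one_div, ← mul_le_mul_iff_right₀ hβ0, mul_inv_cancel_left₀ hβ0.ne']
    linarith
  have heq : ∀ ε : ℝ, 0 < ε → ∃ m : ℕ, ∀ β : ℝ, 1 ≤ β → ∀ x y : MarkovShift A,
      (∀ i < m, x.1 i = y.1 i) →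
      |(1 / β) * Real.log (h β x) - (1 / β) * Real.log (h β y)| < ε := by
    intro ε hε
    obtain ⟨m, hm1, hm2⟩ := ((hWalters.2.eventually (gt_mem_nhds hε)).and
      (eventually_ge_atTop 1)).exists
    refine ⟨m, fun β hβ x y hxy => ?_⟩
    have h1 := hone m hm2 β hβ x y hxy
    have h2 := hone m hm2 β hβ y x (fun i hi => (hxy i hi).symm)
    rw [abs_lt]
    constructor <;> linarith
  refine ⟨⟨E, hbd⟩, fun ε hε => ?_, ?_⟩
  · obtain ⟨m, hm⟩ := heq ε hε
    exact ⟨r ^ m, pow_pos hr0 m, fun β hβ x y hd => hm β hβ x y (agree_of_dist hr0 hr1 hd)⟩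
  · have hb1 : ∀ i : ℕ, (1 : ℝ) ≤ (i : ℝ) + 1 := fun i => by
      have : (0 : ℝ) ≤ i := Nat.cast_nonneg i
      linarith
    obtain ⟨φ, V, hφ, hV⟩ := subseq_converges
      (fun i x => (1 / ((i : ℝ) + 1)) * Real.log (h ((i : ℝ) + 1) x)) E
      (fun i x => hbd _ (hb1 i) x)
      (fun ε hε => by
        obtain ⟨m, hm⟩ := heq ε hε
        exact ⟨m, fun i x y hxy => (hm _ (hb1 i) x y hxy).le⟩)
    refine ⟨fun i => (φ i : ℝ) + 1, V, fun i => hb1 _, ?_, hV⟩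
    exact tendsto_atTop_add_const_right _ _
      (tendsto_natCast_atTop_atTop.comp hφ.tendsto_atTop)

end MarkovShift
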